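/- In the Nehari setting, define m̂ : H¹(V)\{0} → N by m̂(w) = s_w w, where s_w > 0 is the unique value with Φ'(s_w w)(s_w w) = 0, and let m = m̂|_S where S = {w ∈ H¹(V) : ‖w‖ = 1}. Then m̂ is continuous, and m is a homeomorphism between S and the Nehari manifold N = {u ∈ H¹\{0} : Φ'(u)u = 0} (with their subspace topologies), with inverse m⁻¹(u) = u/‖u‖. -/

import Mathlib

open scoped ENNReal

noncomputable section

/-- `H¹(V)`: as a set, the ℓ²-summable real functions on the vertex set;
the `H¹` norm is equivalent to the ℓ² norm by the uniform degree bound. -/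
abbrev H1 (Vtx : Type*) := lp (fun _ : Vtx => ℝ) 2

variable {Vtx : Type*}

/-- `Γ(u,v)(x) = (1/2) Σ_{y∼x} (u(y)-u(x))(v(y)-v(x))`. -/
def gammaProd (adj : Vtx → Vtx → Prop) (u v : Vtx → ℝ) (x : Vtx) : ℝ :=
  (1/2) * ∑' y : {y : Vtx // adj x y}, (u y.1 - u x) * (v y.1 - v x)

/-- `|∇u|²(x) = (1/2) Σ_{y∼x} (u(y)-u(x))²`. -/
def gradSq (adj : Vtx → Vtx → Prop) (u : Vtx → ℝ) (x : Vtx) : ℝ :=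
  gammaProd adj u u x

/-- `Δu(x) = Σ_{y∼x} (u(y)-u(x))`. -/
def graphLap (adj : Vtx → Vtx → Prop) (u : Vtx → ℝ) (x : Vtx) : ℝ :=
  ∑' y : {y : Vtx // adj x y}, (u y.1 - u x)

/-- the norm `‖u‖` induced by the potential `V`:
`‖u‖² = Σ_x (|∇u|²(x) + V(x)u(x)²)`. -/
def nrmV (adj : Vtx → Vtx → Prop) (Vp : Vtx → ℝ) (u : Vtx → ℝ) : ℝ :=
  Real.sqrt (∑' x, (gradSq adj u x + Vp x * (u x)^2))

/-- the `V`-norm of an element of `H¹`. -/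
def nrmH (adj : Vtx → Vtx → Prop) (Vp : Vtx → ℝ) (u : H1 Vtx) : ℝ :=
  nrmV adj Vp (fun y => u y)

/-- `⟨u,v⟩ = Σ_x (Γ(u,v)(x) + V(x)u(x)v(x))`. -/
def iprodH (adj : Vtx → Vtx → Prop) (Vp : Vtx → ℝ) (u v : H1 Vtx) : ℝ :=
  ∑' x, (gammaProd adj (fun y => u y) (fun y => v y) x + Vp x * u x * v x)

/-- the variational functional `Φ(u) = ½‖u‖² − Σ_x F(x,u(x))`. -/
def PhiF (adj : Vtx → Vtx → Prop) (Vp : Vtx → ℝ) (F : Vtx → ℝ → ℝ) (u : H1 Vtx) : ℝ :=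
  (1/2) * ∑' x, (gradSq adj (fun y => u y) x + Vp x * (u x)^2) - ∑' x, F x (u x)

/-- the Nehari manifold `N = {u ∈ H¹\{0} : Φ'(u)u = 0}`. -/
def Nehari (adj : Vtx → Vtx → Prop) (Vp : Vtx → ℝ) (F : Vtx → ℝ → ℝ) : Set (H1 Vtx) :=
  {u | u ≠ 0 ∧ fderiv ℝ (PhiF adj Vp F) u u = 0}

/-- adjacency of the lattice graph `ℤ^N`. -/
def adjZ (N : ℕ) (x y : Fin N → ℤ) : Prop := (∑ i, (x i - y i).natAbs) = 1

end

/-! Write `J u = Φ'(u) u = ‖u‖² - ∑ₓ f(x, u x) u x`. Along the ray of `w ≠ 0`,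
`J (t w) / t² = ‖w‖² - ∑ₓ f(x, t w x) w x / t` is strictly decreasing in `t > 0` because
`f(x, ·) / |·|` is increasing, so `J (t w) > 0` for `t < s_w` and `J (t w) < 0` for `t > s_w`. These
strict signs persist when `w` moves a little, as `J` is continuous, and this traps `s_v` near `s_w`
for `v` near `w`. Since each open ray meets `N` and `S` in exactly one point each, `m` is bijective
with inverse `u / ‖u‖`.

For `Φ` to be differentiable and `J` continuous it suffices that the Nemytskii operator
`u ↦ f(·, u ·)` is continuous on `ℓ²`, by the mean value theorem applied in each coordinate. -/

open Filter Set Topology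
open scoped NNReal

section FiberingMap

variable {E : Type*} [AddCommGroup E] [Module ℝ E]

lemma ne_zero_of_apply_eq_one {n : E → ℝ} (hn : ∀ c : ℝ, 0 ≤ c → ∀ u, n (c • u) = c * n u) {w : E}
    (hw : n w = 1) : w ≠ 0 := by
  rintro rfl
  simpa [hw] using hn 0 le_rfl 0

/-- `s` is the fibering map of `J`: on every open ray `{t • w | t > 0}` the function `J`, divided
by the square of the parameter, is strictly decreasing, and it vanishes at `t = s w`. Nothing is
asked of the junk value `s 0`. For `J u = Φ'(u) u` the point `s w • w` is the projection of `w` to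
the Nehari manifold of `Φ`. -/
structure IsFiberingMap (J s : E → ℝ) : Prop where
  strictAntiOn : ∀ w ≠ 0, StrictAntiOn (fun t : ℝ => J (t • w) / t ^ 2) (Ioi 0)
  pos : ∀ w ≠ 0, 0 < s w
  apply_smul : ∀ w ≠ 0, J (s w • w) = 0

namespace IsFiberingMap

variable {J s n : E → ℝ} {u w : E} {t : ℝ}

lemma apply_smul_pos_iff (h : IsFiberingMap J s) (hw : w ≠ 0) (ht : 0 < t) :
    0 < J (t • w) ↔ t < s w := by
  have hlt := (h.strictAntiOn w hw).lt_iff_gt (h.pos w hw) ht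
  simpa only [h.apply_smul w hw, zero_div, div_pos_iff_of_pos_right (pow_pos ht 2)] using hlt

lemma apply_smul_neg_iff (h : IsFiberingMap J s) (hw : w ≠ 0) (ht : 0 < t) :
    J (t • w) < 0 ↔ s w < t := by
  have hlt := (h.strictAntiOn w hw).lt_iff_gt ht (h.pos w hw)
  simpa only [h.apply_smul w hw, zero_div, div_lt_iff₀ (pow_pos ht 2), zero_mul] using hlt

lemma eq_of_apply_smul_eq_zero (h : IsFiberingMap J s) (hw : w ≠ 0) (ht : 0 < t)
    (hJ : J (t • w) = 0) : s w = t :=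
  le_antisymm (not_lt.1 fun hlt => ((h.apply_smul_pos_iff hw ht).2 hlt).ne' hJ)
    (not_lt.1 fun hlt => ((h.apply_smul_neg_iff hw ht).2 hlt).ne hJ)

theorem continuousOn [TopologicalSpace E] [T1Space E] [ContinuousConstSMul ℝ E]
    (h : IsFiberingMap J s) (hJ : Continuous J) : ContinuousOn s {w | w ≠ 0} := by
  intro w hw
  have hne : ∀ᶠ v in 𝓝 w, v ≠ 0 := isOpen_ne.mem_nhds hw
  have hJt (t : ℝ) : ContinuousAt (fun v => J (t • v)) w :=
    (hJ.comp (continuous_const_smul t)).continuousAt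
  refine ContinuousAt.continuousWithinAt (tendsto_order.2 ⟨fun b hb => ?_, fun b hb => ?_⟩)
  · obtain ⟨t, hbt, hts⟩ := exists_between (max_lt hb (h.pos w hw))
    obtain ⟨hbt, ht⟩ := max_lt_iff.1 hbt
    filter_upwards [hne, (hJt t).eventually_const_lt ((h.apply_smul_pos_iff hw ht).2 hts)]
      with v hv hJv
    exact hbt.trans ((h.apply_smul_pos_iff hv ht).1 hJv)
  · have hb0 : 0 < b := (h.pos w hw).trans hb
    filter_upwards [hne, (hJt b).eventually_lt_const ((h.apply_smul_neg_iff hw hb0).2 hb)]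
      with v hv hJv
    exact (h.apply_smul_neg_iff hv hb0).1 hJv

lemma smul_inv_smul (h : IsFiberingMap J s) (hu : u ≠ 0) (hJ : J u = 0) (ht : 0 < t) :
    s (t⁻¹ • u) • t⁻¹ • u = u := by
  have htu : t • t⁻¹ • u = u := smul_inv_smul₀ ht.ne' u
  rw [h.eq_of_apply_smul_eq_zero (smul_ne_zero (inv_ne_zero ht.ne') hu) ht (by rwa [htu]), htu]

lemma inv_smul_smul (h : IsFiberingMap J s) (hn : ∀ c : ℝ, 0 ≤ c → ∀ u, n (c • u) = c * n u)
    (hw : n w = 1) : (n (s w • w))⁻¹ • s w • w = w := by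
  have hs := h.pos w (ne_zero_of_apply_eq_one hn hw)
  rw [hn _ hs.le, hw, mul_one, inv_smul_smul₀ hs.ne']

theorem bijOn (h : IsFiberingMap J s) (hn : ∀ c : ℝ, 0 ≤ c → ∀ u, n (c • u) = c * n u)
    (hn_pos : ∀ u ≠ 0, 0 < n u) :
    BijOn (fun w => s w • w) {w | n w = 1} {u | u ≠ 0 ∧ J u = 0} := by
  refine InvOn.bijOn (f' := fun u => (n u)⁻¹ • u)
    ⟨fun w hw => h.inv_smul_smul hn hw,
      fun u hu => h.smul_inv_smul hu.1 hu.2 (hn_pos u hu.1)⟩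
    (fun w hw => ?_) fun u hu => ?_
  · have hw0 : w ≠ 0 := ne_zero_of_apply_eq_one hn hw
    exact ⟨smul_ne_zero (h.pos w hw0).ne' hw0, h.apply_smul w hw0⟩
  · have hnu := hn_pos u hu.1
    rw [mem_ofPred_eq, hn _ (inv_nonneg.2 hnu.le), inv_mul_cancel₀ hnu.ne']

end IsFiberingMap

end FiberingMap

section Nemytskii

variable {ι : Type*} {E G : ι → Type*} [∀ i, NormedAddCommGroup (E i)]
  [∀ i, NormedAddCommGroup (G i)] {f : ∀ i, E i → G i} {p : ℝ≥0∞}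

/-- On each ball, `‖f i t‖` is at most linear in `‖t‖`, uniformly in `i`: the condition under which
`u ↦ (f i (u i))ᵢ` maps `ℓᵖ` to itself. -/
def LocallyLinearlyBounded (f : ∀ i, E i → G i) : Prop :=
  ∀ M : ℝ, ∃ K : ℝ≥0, ∀ i t, ‖t‖ ≤ M → ‖f i t‖ ≤ K * ‖t‖

lemma sub_sum_lpSingle_apply [DecidableEq ι] (u : lp E p) (S : Finset ι) (j : ι) :
    (u - ∑ i ∈ S, lp.single p i (u i) : lp E p) j = if j ∈ S then 0 else u j := by
  rw [lp.coeFn_sub, Pi.sub_apply, lp.coeFn_sum, Finset.sum_apply]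
  simp only [lp.single_apply, Finset.sum_pi_single]
  split_ifs
  · exact sub_self _
  · exact sub_zero _

variable [Fact (1 ≤ p)]

namespace LocallyLinearlyBounded

lemma memℓp (hf : LocallyLinearlyBounded f) (u : lp E p) : Memℓp (fun i => f i (u i)) p := by
  obtain ⟨K, hK⟩ := hf ‖u‖
  exact ((lp.memℓp u).norm.const_mul (K : ℝ)).mono fun i =>
    hK i _ (lp.norm_apply_le_norm (zero_lt_one.trans_le Fact.out).ne' u i)

/-- The Nemytskii (superposition) operator `u ↦ (f i (u i))ᵢ` on `ℓᵖ`. -/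
def nemytskii (hf : LocallyLinearlyBounded f) (u : lp E p) : lp G p :=
  ⟨fun i => f i (u i), hf.memℓp u⟩

@[simp]
lemma nemytskii_apply (hf : LocallyLinearlyBounded f) (u : lp E p) (i : ι) :
    hf.nemytskii u i = f i (u i) :=
  rfl

end LocallyLinearlyBounded

lemma continuous_sum_lpSingle [DecidableEq ι] (hf : ∀ i, Continuous (f i)) (S : Finset ι) :
    Continuous fun u : lp E p => ∑ i ∈ S, lp.single p i (f i (u i)) :=
  continuous_finsetSum S fun i _ => (lp.isometry_single i).continuous.comp
    ((hf i).comp (lp.lipschitzWith_one_eval p i).continuous)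

lemma LocallyLinearlyBounded.norm_nemytskii_sub_sum_single_le [DecidableEq ι]
    (hf : LocallyLinearlyBounded f) {K : ℝ≥0} (u : lp E p)
    (hK : ∀ i t, ‖t‖ ≤ ‖u‖ → ‖f i t‖ ≤ K * ‖t‖) (S : Finset ι) :
    ‖hf.nemytskii u - ∑ i ∈ S, lp.single p i (f i (u i))‖ ≤
      K * ‖u - ∑ i ∈ S, lp.single p i (u i)‖ := by
  have hp : p ≠ 0 := (zero_lt_one.trans_le Fact.out).ne'
  set v := u - ∑ i ∈ S, lp.single p i (u i) with hv
  calc ‖hf.nemytskii u - ∑ i ∈ S, lp.single p i (hf.nemytskii u i)‖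
      ≤ ‖(K : ℝ) • lp.toNorm v‖ := lp.norm_mono hp fun j => ?_
    _ = K * ‖v‖ := by rw [norm_smul, lp.norm_toNorm, NNReal.norm_eq]
  rw [sub_sum_lpSingle_apply, lp.coeFn_smul, Pi.smul_apply, norm_smul, lp.toNorm_coe,
    hv, sub_sum_lpSingle_apply]
  split_ifs
  · simp
  · simpa using hK j (u j) (lp.norm_apply_le_norm hp u j)

theorem LocallyLinearlyBounded.continuous_nemytskii (hf : LocallyLinearlyBounded f)
    (hcont : ∀ i, Continuous (f i)) (hp : p ≠ ∞) :
    Continuous (hf.nemytskii : lp E p → lp G p) := by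
  -- Near `u` the `ℓᵖ` tails are uniformly small, so the operator is locally a uniform limit of its
  -- truncations to finitely many coordinates.
  classical
  refine continuous_iff_continuousAt.2 fun u =>
    continuousAt_of_locally_uniform_approx_of_continuousAt fun U hU => ?_
  obtain ⟨ε, hε, hεU⟩ := Metric.mem_uniformity_dist.1 hU
  obtain ⟨K, hK⟩ := hf (‖u‖ + 1)
  have hδ : 0 < ε / (K + 1) := by positivity
  obtain ⟨S, hS⟩ := ((Metric.tendsto_nhds.1 (lp.hasSum_single hp u)) _ hδ).exists
  have htail : Continuous fun v : lp E p => ‖v - ∑ i ∈ S, lp.single p i (v i)‖ :=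
    (continuous_id.sub (continuous_sum_lpSingle (fun i => continuous_id) S)).norm
  refine ⟨{v | ‖v‖ < ‖u‖ + 1 ∧ ‖v - ∑ i ∈ S, lp.single p i (v i)‖ < ε / (K + 1)}, ?_,
    fun v => ∑ i ∈ S, lp.single p i (f i (v i)), (continuous_sum_lpSingle hcont S).continuousAt,
    fun v ⟨hv, hvS⟩ => hεU ?_⟩
  · exact (continuous_norm.continuousAt.eventually_lt_const (lt_add_one ‖u‖)).and
      (htail.continuousAt.eventually_lt_const (by rwa [dist_comm, dist_eq_norm] at hS))
  calc dist (hf.nemytskii v) (∑ i ∈ S, lp.single p i (f i (v i)))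
      ≤ K * ‖v - ∑ i ∈ S, lp.single p i (v i)‖ := by
        rw [dist_eq_norm]
        exact hf.norm_nemytskii_sub_sum_single_le v (fun i t ht => hK i t (ht.trans hv.le)) S
    _ ≤ (K + 1) * ‖v - ∑ i ∈ S, lp.single p i (v i)‖ := by
        gcongr
        exact le_add_of_nonneg_right zero_le_one
    _ < ε := by rwa [lt_div_iff₀' (by positivity)] at hvS

end Nemytskii

section Energy

variable {ι κ : Type*}

lemma hasSum_sq_norm (u : H1 ι) : HasSum (fun i => u i ^ 2) (‖u‖ ^ 2) := by
  simpa only [real_inner_self_eq_norm_sq, Real.norm_eq_abs, sq_abs] using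
    lp.hasSum_inner (𝕜 := ℝ) u u

lemma sum_comp_le_mul_of_hasSum {φ : ι → ℝ} {a : ℝ} (hφ : HasSum φ a) (hφ0 : ∀ i, 0 ≤ φ i)
    {g : κ → ι} {D : ℕ} (hg : ∀ i, (g ⁻¹' {i}).encard ≤ D) (s : Finset κ) :
    ∑ k ∈ s, φ (g k) ≤ D * a := by
  classical
  have card_le (i : ι) : (s.filter (g · = i)).card ≤ D := by
    have hsub : (↑(s.filter (g · = i)) : Set κ) ⊆ g ⁻¹' {i} := fun k hk =>
      (Finset.mem_filter.1 hk).2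
    simpa only [encard_coe_eq_coe_finsetCard, Nat.cast_le] using
      (encard_le_encard hsub).trans (hg i)
  calc ∑ k ∈ s, φ (g k)
      = ∑ i ∈ s.image g, (s.filter (g · = i)).card • φ i := Finset.sum_comp φ g
    _ ≤ ∑ i ∈ s.image g, D * φ i := Finset.sum_le_sum fun i _ => by
        rw [nsmul_eq_mul]
        exact mul_le_mul_of_nonneg_right (mod_cast card_le i) (hφ0 i)
    _ = D * ∑ i ∈ s.image g, φ i := (Finset.mul_sum ..).symm
    _ ≤ D * a :=
        mul_le_mul_of_nonneg_left (sum_le_hasSum _ (fun i _ => hφ0 i) hφ) D.cast_nonneg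

/-- The bounded operator `ℓ²(ι) → ℓ²(κ)` given by a linear map of functions that is bounded for
the `ℓ²` norms; boundedness is asked on finite sums, so that it includes square summability. -/
noncomputable def l2MapOfBound (T : (ι → ℝ) →ₗ[ℝ] κ → ℝ) (C : ℝ≥0)
    (hT : ∀ (u : H1 ι) (s : Finset κ), ∑ k ∈ s, T u k ^ 2 ≤ C * ‖u‖ ^ 2) : H1 ι →L[ℝ] H1 κ :=
  LinearMap.mkContinuous
    { toFun u := ⟨T u, memℓp_gen' (C := C * ‖u‖ ^ 2) fun s => by simpa using hT u s⟩
      map_add' u v := Subtype.ext (T.map_add u v)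
      map_smul' c u := Subtype.ext (T.map_smul c u) }
    (NNReal.sqrt C) fun u => lp.norm_le_of_forall_sum_le (by simp) (by positivity) fun s => by
      simpa [mul_pow, ← NNReal.coe_pow] using hT u s

variable {adj : ι → ι → Prop} {D : ℕ} (hsym : ∀ x y, adj x y → adj y x)
  (hdeg : ∀ x, {y | adj x y}.encard ≤ D)

include hdeg in
lemma encard_preimage_source_le (x : ι) :
    ((fun e : Σ x, {y // adj x y} => e.1) ⁻¹' {x}).encard ≤ D := by
  refine (encard_le_encard_of_injOn (f := fun e => e.2.1) (t := {y | adj x y}) ?_ ?_).trans (hdeg x)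
  · rintro ⟨x, y, hxy⟩ rfl
    exact hxy
  · rintro ⟨x, y, hxy⟩ hx ⟨x', y', hxy'⟩ hx' rfl
    obtain rfl : x = x' := hx.trans hx'.symm
    rfl

include hsym hdeg in
lemma encard_preimage_target_le (y : ι) :
    ((fun e : Σ x, {y // adj x y} => e.2.1) ⁻¹' {y}).encard ≤ D := by
  refine (encard_le_encard_of_injOn (f := fun e => e.1) (t := {x | adj y x}) ?_ ?_).trans (hdeg y)
  · rintro ⟨x, y, hxy⟩ rfl
    exact hsym x y hxy
  · rintro ⟨x, y, hxy⟩ hy ⟨x', y', hxy'⟩ hy' rfl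
    obtain rfl : y = y' := hy.trans hy'.symm
    rfl

include hsym hdeg in
lemma sum_edge_sub_sq_le (u : H1 ι) (s : Finset (Σ x, {y // adj x y})) :
    ∑ e ∈ s, (u e.2.1 - u e.1) ^ 2 ≤ 4 * D * ‖u‖ ^ 2 := by
  have htarget : ∑ e ∈ s, u e.2.1 ^ 2 ≤ D * ‖u‖ ^ 2 :=
    sum_comp_le_mul_of_hasSum (hasSum_sq_norm u) (fun x => sq_nonneg (u x))
      (encard_preimage_target_le hsym hdeg) s
  have hsource : ∑ e ∈ s, u e.1 ^ 2 ≤ D * ‖u‖ ^ 2 :=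
    sum_comp_le_mul_of_hasSum (hasSum_sq_norm u) (fun x => sq_nonneg (u x))
      (encard_preimage_source_le hdeg) s
  calc ∑ e ∈ s, (u e.2.1 - u e.1) ^ 2
      ≤ ∑ e ∈ s, 2 * (u e.2.1 ^ 2 + u e.1 ^ 2) := Finset.sum_le_sum fun e _ => by
        linarith [sq_nonneg (u e.2.1 + u e.1)]
    _ = 2 * (∑ e ∈ s, u e.2.1 ^ 2 + ∑ e ∈ s, u e.1 ^ 2) := by
        rw [← Finset.mul_sum, Finset.sum_add_distrib]
    _ ≤ 4 * D * ‖u‖ ^ 2 := by linarith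

/-- The discrete gradient `(u y - u x)` over the oriented edges `x ∼ y`, as a bounded operator on
`ℓ²`. -/
noncomputable def discreteGradient : H1 ι →L[ℝ] H1 (Σ x, {y // adj x y}) :=
  l2MapOfBound (LinearMap.funLeft ℝ ℝ (·.2.1) - LinearMap.funLeft ℝ ℝ (·.1)) (4 * D) fun u s =>
    mod_cast sum_edge_sub_sq_le hsym hdeg u s

lemma discreteGradient_apply (u : H1 ι) (e : Σ x, {y // adj x y}) :
    discreteGradient hsym hdeg u e = u e.2.1 - u e.1 :=
  rfl

variable {V : ι → ℝ} {C : ℝ} (hV : ∀ x, 0 ≤ V x) (hVC : ∀ x, V x ≤ C)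

/-- Multiplication by `√V`, as a bounded operator on `ℓ²`. -/
noncomputable def sqrtMul : H1 ι →L[ℝ] H1 ι :=
  l2MapOfBound (LinearMap.pi fun x => √(V x) • LinearMap.proj x) C.toNNReal fun u s =>
    calc ∑ x ∈ s, (√(V x) * u x) ^ 2
        ≤ ∑ x ∈ s, C.toNNReal * u x ^ 2 := Finset.sum_le_sum fun x _ => by
          rw [mul_pow, Real.sq_sqrt (hV x)]
          exact mul_le_mul_of_nonneg_right ((hVC x).trans C.le_coe_toNNReal) (sq_nonneg _)
      _ = C.toNNReal * ∑ x ∈ s, u x ^ 2 := (Finset.mul_sum ..).symm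
      _ ≤ C.toNNReal * ‖u‖ ^ 2 := by
          gcongr
          exact sum_le_hasSum s (fun x _ => sq_nonneg (u x)) (hasSum_sq_norm u)

lemma sqrtMul_apply (u : H1 ι) (x : ι) :
    sqrtMul hV hVC u x = √(V x) * u x :=
  rfl

lemma hasSum_gradSq (u : H1 ι) :
    HasSum (fun x => gradSq adj (fun y => u y) x) (1 / 2 * ‖discreteGradient hsym hdeg u‖ ^ 2) := by
  have hedges := hasSum_sq_norm (discreteGradient hsym hdeg u)
  simpa only [gradSq, gammaProd, discreteGradient_apply, pow_two] using
    (hedges.sigma fun x => (hedges.summable.sigma_factor x).hasSum).mul_left (1 / 2)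

lemma hasSum_mul_sq (u : H1 ι) :
    HasSum (fun x => V x * u x ^ 2) (‖sqrtMul hV hVC u‖ ^ 2) := by
  simpa only [sqrtMul_apply, mul_pow, Real.sq_sqrt (hV _)] using hasSum_sq_norm (sqrtMul hV hVC u)

lemma tsum_energy_eq (u : H1 ι) :
    ∑' x, (gradSq adj (fun y => u y) x + V x * u x ^ 2) =
      1 / 2 * ‖discreteGradient hsym hdeg u‖ ^ 2 + ‖sqrtMul hV hVC u‖ ^ 2 :=
  ((hasSum_gradSq hsym hdeg u).add (hasSum_mul_sq hV hVC u)).tsum_eq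

lemma nrmH_eq_sqrt (u : H1 ι) :
    nrmH adj V u = √(1 / 2 * ‖discreteGradient hsym hdeg u‖ ^ 2 + ‖sqrtMul hV hVC u‖ ^ 2) :=
  congrArg Real.sqrt (tsum_energy_eq hsym hdeg hV hVC u)

include hsym hdeg hV hVC in
lemma continuous_nrmH : Continuous (nrmH adj V) := by
  rw [funext (nrmH_eq_sqrt hsym hdeg hV hVC)]
  fun_prop

include hsym hdeg hVC in
lemma nrmH_pos (hV : ∀ x, 0 < V x) {u : H1 ι} (hu : u ≠ 0) : 0 < nrmH adj V u := by
  have hsqrt : sqrtMul (fun x => (hV x).le) hVC u ≠ 0 := fun h => hu <| lp.ext <| funext fun x =>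
    (mul_eq_zero.1 (congrFun (congrArg Subtype.val h) x)).resolve_left (Real.sqrt_pos.2 (hV x)).ne'
  rw [nrmH_eq_sqrt hsym hdeg (fun x => (hV x).le) hVC]
  have := norm_pos_iff.2 hsqrt
  positivity

lemma nrmH_smul (adj : ι → ι → Prop) (V : ι → ℝ) (c : ℝ) (u : H1 ι) :
    nrmH adj V (c • u) = |c| * nrmH adj V u := by
  have hsmul (x : ι) : gradSq adj (fun y => (c • u) y) x + V x * (c • u) x ^ 2 =
      c ^ 2 * (gradSq adj (fun y => u y) x + V x * u x ^ 2) := by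
    simp only [gradSq, gammaProd, lp.coeFn_smul, Pi.smul_apply, smul_eq_mul, ← mul_sub,
      mul_mul_mul_comm c _ c, tsum_mul_left]
    ring
  rw [nrmH, nrmV, tsum_congr hsmul, tsum_mul_left, Real.sqrt_mul (sq_nonneg c), Real.sqrt_sq_eq_abs]
  rfl

end Energy

section Potential

lemma exists_abs_le_sub_eq_mul {g g' : ℝ → ℝ} (hg : ∀ t, HasDerivAt g (g' t) t) (t h : ℝ) :
    ∃ k, |k| ≤ |h| ∧ g (t + h) - g t = g' (t + k) * h := by
  have hline (r : ℝ) : HasDerivAt (fun r => g (t + r * h)) (g' (t + r * h) * h) r :=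
    (hg _).comp r ((hasDerivAt_mul_const h).const_add t)
  obtain ⟨r, ⟨hr0, hr1⟩, hr⟩ := exists_hasDerivAt_eq_slope _ _ zero_lt_one
    (fun r _ => (hline r).continuousAt.continuousWithinAt) fun r _ => hline r
  refine ⟨r * h, ?_, by simpa using hr.symm⟩
  rw [abs_mul, abs_of_pos hr0]
  exact mul_le_of_le_one_left (abs_nonneg h) hr1.le

variable {ι : Type*} {f F : ι → ℝ → ℝ}

namespace LocallyLinearlyBounded

lemma hasSum_mul (hf : LocallyLinearlyBounded f) (u v : H1 ι) :
    HasSum (fun i => f i (u i) * v i) (inner ℝ (hf.nemytskii u) v) := by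
  simpa [mul_comm] using lp.hasSum_inner (𝕜 := ℝ) (hf.nemytskii u) v

lemma exists_hasSum_sub (hf : LocallyLinearlyBounded f)
    (hF : ∀ i t, HasDerivAt (F i) (f i t) t) (u h : H1 ι) :
    ∃ k : H1 ι, ‖k‖ ≤ ‖h‖ ∧
      HasSum (fun i => F i (u i + h i) - F i (u i)) (inner ℝ (hf.nemytskii (u + k)) h) := by
  choose k hkh hk using fun i => exists_abs_le_sub_eq_mul (hF i) (u i) (h i)
  let k' : H1 ι := ⟨k, (lp.memℓp h).norm.mono hkh⟩
  refine ⟨k', lp.norm_mono two_ne_zero hkh, ?_⟩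
  exact (funext hk) ▸ hf.hasSum_mul (u + k') h

lemma summable_comp (hf : LocallyLinearlyBounded f) (hF0 : ∀ i, F i 0 = 0)
    (hF : ∀ i t, HasDerivAt (F i) (f i t) t) (u : H1 ι) : Summable fun i => F i (u i) := by
  obtain ⟨k, -, hk⟩ := hf.exists_hasSum_sub hF 0 u
  simpa [hF0] using hk.summable

theorem hasFDerivAt_tsum (hf : LocallyLinearlyBounded f) (hcont : ∀ i, Continuous (f i))
    (hF0 : ∀ i, F i 0 = 0) (hF : ∀ i t, HasDerivAt (F i) (f i t) t) (u : H1 ι) :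
    HasFDerivAt (fun v : H1 ι => ∑' i, F i (v i)) (innerSL ℝ (hf.nemytskii u)) u := by
  rw [hasFDerivAt_iff_isLittleO_nhds_zero, Asymptotics.isLittleO_iff]
  intro ε hε
  obtain ⟨δ, hδ, hclose⟩ := Metric.continuous_iff.1
    (hf.continuous_nemytskii hcont (p := 2) ENNReal.ofNat_ne_top) u ε hε
  filter_upwards [Metric.ball_mem_nhds (0 : H1 ι) hδ] with h hh
  obtain ⟨k, hkh, hk⟩ := hf.exists_hasSum_sub hF u h
  have hsub : ∑' i, F i ((u + h) i) - ∑' i, F i (u i) = inner ℝ (hf.nemytskii (u + k)) h :=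
    ((hf.summable_comp hF0 hF (u + h)).tsum_sub (hf.summable_comp hF0 hF u)).symm.trans hk.tsum_eq
  rw [hsub, innerSL_apply_apply, ← inner_sub_left]
  refine (norm_inner_le_norm _ _).trans (mul_le_mul_of_nonneg_right ?_ (norm_nonneg h))
  rw [← dist_eq_norm]
  exact (hclose _ (by simpa using hkh.trans_lt (mem_ball_zero_iff.1 hh))).le

end LocallyLinearlyBounded

lemma locallyLinearlyBounded_of_growth {a q : ℝ} (ha : 0 ≤ a) (hq : 2 ≤ q)
    (hgrowth : ∀ i t, |f i t| ≤ a * (|t| + |t| ^ (q - 1))) : LocallyLinearlyBounded f := by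
  intro M
  refine ⟨(a * (1 + |M| ^ (q - 2))).toNNReal, fun i t ht => ?_⟩
  have hpow : |t| ^ (q - 1) ≤ |M| ^ (q - 2) * |t| := by
    rw [show q - 1 = q - 2 + 1 by ring, Real.rpow_add_one' (abs_nonneg t) (by linarith)]
    exact mul_le_mul_of_nonneg_right (Real.rpow_le_rpow (abs_nonneg t)
      (ht.trans (le_abs_self M)) (by linarith)) (abs_nonneg t)
  rw [Real.coe_toNNReal _ (by positivity)]
  calc |f i t| ≤ a * (|t| + |t| ^ (q - 1)) := hgrowth i t
    _ ≤ a * (|t| + |M| ^ (q - 2) * |t|) := by gcongr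
    _ = a * (1 + |M| ^ (q - 2)) * |t| := by ring

end Potential

section Nehari

lemma strictMonoOn_comp_mul_mul_div {g : ℝ → ℝ} (hneg : StrictMonoOn (fun t => g t / |t|) (Iio 0))
    (hpos : StrictMonoOn (fun t => g t / |t|) (Ioi 0)) {z : ℝ} (hz : z ≠ 0) :
    StrictMonoOn (fun t => g (t * z) * z / t) (Ioi 0) := by
  intro t₁ (ht₁ : 0 < t₁) t₂ (ht₂ : 0 < t₂) h
  have eq_slope_mul {t : ℝ} (ht : 0 < t) :
      g (t * z) * z / t = g (t * z) / |t * z| * (z * |z|) := by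
    rw [abs_mul, abs_of_pos ht]
    field_simp
  simp only [eq_slope_mul ht₁, eq_slope_mul ht₂]
  rcases hz.lt_or_gt with hz | hz
  · exact mul_lt_mul_of_neg_right
      (hneg (mul_neg_of_pos_of_neg ht₂ hz) (mul_neg_of_pos_of_neg ht₁ hz)
        (mul_lt_mul_of_neg_right h hz)) (mul_neg_of_neg_of_pos hz (abs_pos.2 hz.ne))
  · exact mul_lt_mul_of_pos_right
      (hpos (mul_pos ht₁ hz) (mul_pos ht₂ hz) (mul_lt_mul_of_pos_right h hz))
      (mul_pos hz (abs_pos.2 hz.ne'))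

variable {ι : Type*} {f F : ι → ℝ → ℝ}

lemma LocallyLinearlyBounded.strictMonoOn_inner_nemytskii_smul_div (hf : LocallyLinearlyBounded f)
    (hmono : ∀ i, StrictMonoOn (fun t => f i t / |t|) (Iio 0) ∧
      StrictMonoOn (fun t => f i t / |t|) (Ioi 0)) {w : H1 ι} (hw : w ≠ 0) :
    StrictMonoOn (fun t : ℝ => inner ℝ (hf.nemytskii (t • w)) w / t) (Ioi 0) := by
  intro t₁ ht₁ t₂ ht₂ h
  have hsum (t : ℝ) : HasSum (fun i => f i (t * w i) * w i / t)
      (inner ℝ (hf.nemytskii (t • w)) w / t) :=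
    (hf.hasSum_mul (t • w) w).div_const t
  have hlt {i : ι} (hi : w i ≠ 0) : f i (t₁ * w i) * w i / t₁ < f i (t₂ * w i) * w i / t₂ :=
    strictMonoOn_comp_mul_mul_div (hmono i).1 (hmono i).2 hi ht₁ ht₂ h
  obtain ⟨j, hj⟩ : ∃ j, w j ≠ 0 := by
    by_contra! hzero
    exact hw (lp.ext (funext hzero))
  refine hasSum_lt (fun i => ?_) (hlt hj) (hsum t₁) (hsum t₂)
  rcases eq_or_ne (w i) 0 with hi | hi
  · simp [hi]
  · exact (hlt hi).le

variable {adj : ι → ι → Prop} {D : ℕ} {V : ι → ℝ} {C : ℝ} (hsym : ∀ x y, adj x y → adj y x)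
  (hdeg : ∀ x, {y | adj x y}.encard ≤ D) (hV : ∀ x, 0 ≤ V x) (hVC : ∀ x, V x ≤ C)
  (hf : LocallyLinearlyBounded f) (hcont : ∀ x, Continuous (f x)) (hF0 : ∀ x, F x 0 = 0)
  (hF : ∀ x t, HasDerivAt (F x) (f x t) t)

include hsym hdeg hV hVC hf hcont hF0 hF

lemma fderiv_PhiF_apply_self (u : H1 ι) :
    fderiv ℝ (PhiF adj V F) u u = nrmH adj V u ^ 2 - inner ℝ (hf.nemytskii u) u := by
  set A := discreteGradient hsym hdeg
  set B := sqrtMul hV hVC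
  have hΦ : PhiF adj V F =
      fun v : H1 ι => 1 / 2 * (1 / 2 * ‖A v‖ ^ 2 + ‖B v‖ ^ 2) - ∑' x, F x (v x) := by
    funext v
    rw [PhiF, tsum_energy_eq hsym hdeg hV hVC]
  have hderiv := ((((A.hasFDerivAt (x := u)).norm_sq.const_mul (1 / 2)).fun_add
    (B.hasFDerivAt (x := u)).norm_sq).const_mul (1 / 2)).fun_sub
      (hf.hasFDerivAt_tsum hcont hF0 hF u)
  rw [hΦ, hderiv.fderiv, nrmH_eq_sqrt hsym hdeg hV hVC, Real.sq_sqrt (by positivity)]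
  simp only [sub_apply, add_apply, smul_apply, ContinuousLinearMap.comp_apply,
    innerSL_apply_apply, real_inner_self_eq_norm_sq, nsmul_eq_mul, smul_eq_mul]
  ring

lemma isFiberingMap_fderiv_PhiF
    (hmono : ∀ x, StrictMonoOn (fun t => f x t / |t|) (Iio 0) ∧
      StrictMonoOn (fun t => f x t / |t|) (Ioi 0)) {s : H1 ι → ℝ}
    (hs : ∀ w ≠ 0, 0 < s w ∧ fderiv ℝ (PhiF adj V F) (s w • w) (s w • w) = 0) :
    IsFiberingMap (fun u => fderiv ℝ (PhiF adj V F) u u) s where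
  strictAntiOn w hw := by
    have along_ray {t : ℝ} (ht : 0 < t) : fderiv ℝ (PhiF adj V F) (t • w) (t • w) / t ^ 2 =
        nrmH adj V w ^ 2 - inner ℝ (hf.nemytskii (t • w)) w / t := by
      rw [fderiv_PhiF_apply_self hsym hdeg hV hVC hf hcont hF0 hF, nrmH_smul, inner_smul_right,
        mul_pow, sq_abs]
      field_simp
    intro t₁ ht₁ t₂ ht₂ h
    simpa only [along_ray ht₁, along_ray ht₂] using sub_lt_sub_left
      (hf.strictMonoOn_inner_nemytskii_smul_div hmono hw ht₁ ht₂ h) (nrmH adj V w ^ 2)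
  pos w hw := (hs w hw).1
  apply_smul w hw := (hs w hw).2

lemma continuous_fderiv_PhiF_apply_self :
    Continuous fun u => fderiv ℝ (PhiF adj V F) u u := by
  simp only [fderiv_PhiF_apply_self hsym hdeg hV hVC hf hcont hF0 hF]
  exact ((continuous_nrmH hsym hdeg hV hVC).pow 2).sub
    ((hf.continuous_nemytskii hcont (p := 2) ENNReal.ofNat_ne_top).inner continuous_id)

end Nehari

theorem stmt11_general {ι : Type*} (adj : ι → ι → Prop) (D : ℕ)
    (hsym : ∀ x y, adj x y → adj y x) (hdeg : ∀ x, {y | adj x y}.encard ≤ D)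
    (V : ι → ℝ) (C : ℝ) (hV : ∀ x, 0 < V x) (hVC : ∀ x, V x ≤ C)
    (f : ι → ℝ → ℝ) (hcont : ∀ x, Continuous (f x)) (hf : LocallyLinearlyBounded f)
    (hmono : ∀ x, StrictMonoOn (fun t => f x t / |t|) (Iio 0) ∧
      StrictMonoOn (fun t => f x t / |t|) (Ioi 0))
    (F : ι → ℝ → ℝ) (hF : ∀ x t, F x t = ∫ r in (0 : ℝ)..t, f x r) (s : H1 ι → ℝ)
    (hs : ∀ w ≠ 0, 0 < s w ∧ fderiv ℝ (PhiF adj V F) (s w • w) (s w • w) = 0) :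
    ContinuousOn (fun w => s w • w) {w | w ≠ 0} ∧
    BijOn (fun w => s w • w) {w | nrmH adj V w = 1} (Nehari adj V F) ∧
    ContinuousOn (fun u => (nrmH adj V u)⁻¹ • u) (Nehari adj V F) ∧
    (∀ u ∈ Nehari adj V F, s ((nrmH adj V u)⁻¹ • u) • (nrmH adj V u)⁻¹ • u = u) ∧
    ∀ w, nrmH adj V w = 1 → (nrmH adj V (s w • w))⁻¹ • s w • w = w := by
  have hF0 (x : ι) : F x 0 = 0 := by rw [hF, intervalIntegral.integral_same]
  have hF' (x : ι) (t : ℝ) : HasDerivAt (F x) (f x t) t := by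
    rw [funext (hF x)]
    exact ((hcont x).integral_hasStrictDerivAt 0 t).hasDerivAt
  have hV0 (x : ι) : 0 ≤ V x := (hV x).le
  have hfib := isFiberingMap_fderiv_PhiF hsym hdeg hV0 hVC hf hcont hF0 hF' hmono hs
  have hJ := continuous_fderiv_PhiF_apply_self hsym hdeg hV0 hVC hf hcont hF0 hF'
  have hn := continuous_nrmH hsym hdeg hV0 hVC
  have hn_pos {u : H1 ι} (hu : u ≠ 0) := nrmH_pos hsym hdeg hVC hV hu
  have hn_smul (c : ℝ) (hc : 0 ≤ c) (u : H1 ι) : nrmH adj V (c • u) = c * nrmH adj V u := by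
    rw [nrmH_smul, abs_of_nonneg hc]
  exact ⟨(hfib.continuousOn hJ).smul continuousOn_id,
    hfib.bijOn hn_smul fun u hu => hn_pos hu,
    (hn.continuousOn.inv₀ fun u hu => (hn_pos hu.1).ne').smul continuousOn_id,
    fun u hu => hfib.smul_inv_smul hu.1 hu.2 (hn_pos hu.1),
    fun w hw => hfib.inv_smul_smul hn_smul hw⟩

/-- Proposition 3.4: `m̂(w) = s_w w` is continuous on `H¹\{0}`, and its restriction `m`
to the unit sphere `S` is a homeomorphism onto the Nehari manifold `N`, with inverse
`m⁻¹(u) = u/‖u‖`. -/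
theorem stmt11
    {Vtx : Type*} (adj : Vtx → Vtx → Prop) (D : ℕ)
    (hsym : ∀ x y, adj x y → adj y x)
    (hirr : ∀ x, ¬ adj x x)
    (hfin : ∀ x, {y | adj x y}.Finite)
    (hdeg : ∀ x, {y | adj x y}.ncard ≤ D)
    (Vp : Vtx → ℝ) (C1 C2 : ℝ) (hC1 : 0 < C1)
    (hVbd : ∀ x, C1 ≤ Vp x ∧ Vp x ≤ C2)
    (f : Vtx → ℝ → ℝ) (hcont : ∀ x, Continuous (f x))
    (a q : ℝ) (ha : 0 < a) (hq : 2 < q)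
    (hgrowth : ∀ x t, |f x t| ≤ a * (|t| + |t| ^ (q - 1)))
    (hsmall : ∀ ε > 0, ∃ δ > 0, ∀ x t, t ≠ 0 → |t| < δ → |f x t| ≤ ε * |t|)
    (hmono : ∀ x, StrictMonoOn (fun t => f x t / |t|) (Set.Iio 0) ∧
             StrictMonoOn (fun t => f x t / |t|) (Set.Ioi 0))
    (F : Vtx → ℝ → ℝ) (hF : ∀ x t, F x t = ∫ s in (0:ℝ)..t, f x s)
    (hsuper : ∀ M : ℝ, ∃ R > 0, ∀ x t, R ≤ |t| → M ≤ F x t / t ^ 2)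
    (sw : H1 Vtx → ℝ)
    (hsw : ∀ w : H1 Vtx, w ≠ 0 → 0 < sw w ∧
      fderiv ℝ (PhiF adj Vp F) (sw w • w) (sw w • w) = 0 ∧
      ∀ s : ℝ, 0 < s → fderiv ℝ (PhiF adj Vp F) (s • w) (s • w) = 0 → s = sw w)
    :
    ContinuousOn (fun w : H1 Vtx => sw w • w) {w : H1 Vtx | w ≠ 0} ∧
    Set.BijOn (fun w : H1 Vtx => sw w • w)
      {w : H1 Vtx | nrmH adj Vp w = 1} (Nehari adj Vp F) ∧
    ContinuousOn (fun u : H1 Vtx => (nrmH adj Vp u)⁻¹ • u) (Nehari adj Vp F) ∧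
    (∀ u ∈ Nehari adj Vp F,
      sw ((nrmH adj Vp u)⁻¹ • u) • ((nrmH adj Vp u)⁻¹ • u) = u) ∧
    (∀ w : H1 Vtx, nrmH adj Vp w = 1 →
      (nrmH adj Vp (sw w • w))⁻¹ • (sw w • w) = w) :=
  stmt11_general adj D hsym (fun x => (hfin x).cast_ncard_eq ▸ mod_cast hdeg x) Vp C2
    (fun x => hC1.trans_le (hVbd x).1) (fun x => (hVbd x).2) f hcont
    (locallyLinearlyBounded_of_growth ha.le hq.le hgrowth) hmono F hF sw
    fun w hw => ⟨(hsw w hw).1, (hsw w hw).2.1⟩
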